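/- arXiv:2603.02113 — 8 statements merged into one kernel-verified Lean document; each statement's English description precedes it below -/
import Mathlib

section
/- Let (N, (A_i)_{i∈N}, (u_i)_{i∈N}) be a finite simultaneous-move game and let p = (p_i)_{i∈N} be a marginal strategy profile. Then p is compatible with a correlated equilibrium (i.e., there exists a correlated equilibrium q ∈ Δ(∏_i A_i) whose marginal on each A_i equals p_i) if and only if p is unexploitable by action-wise transfer schemes (i.e., there do not exist fee functions f_i : A_i → ℝ and stochastic kernels η_i : A_i → Δ(A_i), one pair for each player i, such that (1) for every action profile a ∈ ∏_i A_i, Σ_{i∈N} [u_i(a) + f_i(a_i)] ≤ Σ_{i∈N} Σ_{a_i'∈A_i} η_i(a_i, a_i') u_i(a_i', a_{-i}), and (2) Σ_{i∈N} Σ_{a_i∈A_i} p_i(a_i) f_i(a_i) > 0). -/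
open Finset

variable {N : Type*} [Fintype N] [Nonempty N] [DecidableEq N]
  {A : N → Type*} [∀ i, Fintype (A i)] [∀ i, Nonempty (A i)] [∀ i, DecidableEq (A i)]

/-- `p` is a marginal strategy profile: each `p i` is a probability distribution on `A i`. -/
def IsMarginalProfile (p : ∀ i, A i → ℝ) : Prop :=
  (∀ i (b : A i), 0 ≤ p i b) ∧ ∀ i, ∑ b : A i, p i b = 1

/-- `q` is a correlated equilibrium of the game with utilities `u`. -/
def IsCorrelatedEq (u : ∀ i : N, (∀ j, A j) → ℝ) (q : (∀ j, A j) → ℝ) : Prop :=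
  (∀ a, 0 ≤ q a) ∧ (∑ a : ∀ j, A j, q a = 1) ∧
    ∀ (i : N) (b b' : A i),
      0 ≤ ∑ a : ∀ j, A j,
            (if a i = b then q a * (u i a - u i (Function.update a i b')) else 0)

/-- The marginal of the joint distribution `q` on `A i`. -/
def marg (q : (∀ j, A j) → ℝ) (i : N) (b : A i) : ℝ :=
  ∑ a : ∀ j, A j, if a i = b then q a else 0

/-- Each row `η i b` is a probability distribution on `A i` (a stochastic kernel). -/
def IsKernel (η : ∀ i, A i → A i → ℝ) : Prop :=
  ∀ i (b : A i), (∀ b' : A i, 0 ≤ η i b b') ∧ ∑ b' : A i, η i b b' = 1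

theorem farkas_aux {Q ι κ : Type*} [Fintype Q] [Fintype ι] [Fintype κ]
    (M : Q → ι → ℝ) (D : Q → κ → ℝ)
    (h : ¬ ∃ q : Q → ℝ, (∀ a, 0 ≤ q a) ∧ ∑ a, q a = 1 ∧ (∀ i, ∑ a, q a * M a i = 0) ∧
      ∀ k, 0 ≤ ∑ a, q a * D a k) :
    ∃ (g : ι → ℝ) (l : κ → ℝ), (∀ k, 0 ≤ l k) ∧
      ∀ a, ∑ i, g i * M a i + ∑ k, l k * D a k < 0 := by
  classical
  let L : (Q → ℝ) →ₗ[ℝ] (ι ⊕ κ → ℝ) :=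
    { toFun := fun q => Sum.elim (fun i => ∑ a, q a * M a i) (fun k => ∑ a, q a * D a k)
      map_add' := by
        intro x y
        ext j
        rcases j with j | j <;> simp [add_mul, Finset.sum_add_distrib]
      map_smul' := by
        intro c x
        ext j
        rcases j with j | j <;> simp [Finset.mul_sum, mul_assoc] }
  have hL : Continuous L := L.continuous_of_finiteDimensional
  let C : ConvexCone ℝ (ι ⊕ κ → ℝ) :=
    { carrier := {x | (∀ i, x (Sum.inl i) = 0) ∧ ∀ k, 0 ≤ x (Sum.inr k)}
      smul_mem' := by
        intro c hc x hx
        refine ⟨fun i => by simp [hx.1 i], fun k => ?_⟩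
        have := hx.2 k
        simp only [Pi.smul_apply, smul_eq_mul]
        positivity
      add_mem' := by
        intro x hx y hy
        exact ⟨fun i => by simp [hx.1 i, hy.1 i], fun k => add_nonneg (hx.2 k) (hy.2 k)⟩ }
  have hCc : IsClosed (C : Set (ι ⊕ κ → ℝ)) := by
    have : (C : Set (ι ⊕ κ → ℝ)) =
        (⋂ i, {x | x (Sum.inl i) = 0}) ∩ ⋂ k, {x | 0 ≤ x (Sum.inr k)} := by
      ext x; simp [C, ← SetLike.mem_coe]
    rw [this]
    refine (isClosed_iInter fun i => ?_).inter (isClosed_iInter fun k => ?_)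
    · exact isClosed_eq (continuous_apply _) continuous_const
    · exact isClosed_le continuous_const (continuous_apply _)
  have hK1 : Convex ℝ (L '' stdSimplex ℝ Q) := (convex_stdSimplex ℝ Q).linear_image L
  have hK2 : IsCompact (L '' stdSimplex ℝ Q) := (isCompact_stdSimplex ℝ Q).image hL
  have hdis : Disjoint (L '' stdSimplex ℝ Q) (C : Set (ι ⊕ κ → ℝ)) := by
    rw [Set.disjoint_left]
    rintro _ ⟨q, hq, rfl⟩ hc
    exact h ⟨q, hq.1, hq.2, hc.1, hc.2⟩
  obtain ⟨F, s, t, h1, h2, h3⟩ :=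
    geometric_hahn_banach_compact_closed hK1 hK2 C.convex hCc hdis
  have h0 : (0 : ι ⊕ κ → ℝ) ∈ (C : Set _) := ⟨fun i => rfl, fun k => le_rfl⟩
  have ht : t < 0 := by simpa using h3 0 h0
  have hCn : ∀ x ∈ (C : Set _), 0 ≤ F x := by
    intro x hx
    by_contra hn
    push Not at hn
    have hc : 0 < t / F x := div_pos_of_neg_of_neg ht hn
    have := h3 _ (C.smul_mem hc hx)
    rw [map_smul, smul_eq_mul, div_mul_cancel₀ _ hn.ne] at this
    exact lt_irrefl _ this
  have hF : ∀ x, F x = ∑ j, x j * F (Pi.single j 1) := by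
    intro x
    have := LinearMap.pi_apply_eq_sum_univ (F : (ι ⊕ κ → ℝ) →ₗ[ℝ] ℝ) x
    simp only [ContinuousLinearMap.coe_coe, smul_eq_mul] at this
    rw [this]
    refine Finset.sum_congr rfl fun j _ => ?_
    congr 2
    ext k
    simp [Pi.single_apply, eq_comm]
  refine ⟨fun i => F (Pi.single (Sum.inl i) 1), fun k => F (Pi.single (Sum.inr k) 1), ?_, ?_⟩
  · intro k
    apply hCn
    refine ⟨fun i => by simp, fun k' => ?_⟩
    by_cases hk : k' = k
    · subst hk; simp
    · simp [Pi.single_apply, hk]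
  · intro a
    have ha := h1 _ ⟨Pi.single a 1, single_mem_stdSimplex ℝ a, rfl⟩
    rw [hF] at ha
    have e : (L (Pi.single a 1)) = Sum.elim (M a) (D a) := by
      ext j
      rcases j with j | j <;> simp [L, Pi.single_apply]
    rw [e, Fintype.sum_sum_type] at ha
    simp only [Sum.elim_inl, Sum.elim_inr] at ha
    simp only [mul_comm (F _)]
    linarith

theorem sum_profile_eq {i : N} (φ : (∀ j, A j) → ℝ) (w : A i → ℝ) :
    ∑ a : ∀ j, A j, w (a i) * φ a = ∑ b, w b * ∑ a : ∀ j, A j, if a i = b then φ a else 0 := by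
  simp only [Finset.mul_sum]
  rw [Finset.sum_comm]
  refine Finset.sum_congr rfl fun a _ => ?_
  simp

theorem easy_dir (u : ∀ i : N, (∀ j, A j) → ℝ) (p : ∀ i, A i → ℝ)
    (q : (∀ j, A j) → ℝ) (hq : IsCorrelatedEq u q) (hm : ∀ i (b : A i), marg q i b = p i b)
    (f : ∀ i, A i → ℝ) (η : ∀ i, A i → A i → ℝ) (hη : IsKernel η)
    (h : ∀ a : ∀ j, A j, ∑ i, (u i a + f i (a i)) ≤
              ∑ i, ∑ b' : A i, η i (a i) b' * u i (Function.update a i b')) :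
    ∑ i, ∑ b : A i, p i b * f i b ≤ 0 := by
  have e1 : ∑ i, ∑ b : A i, p i b * f i b = ∑ a, q a * ∑ i, f i (a i) := by
    simp only [Finset.mul_sum]
    rw [Finset.sum_comm]
    refine Finset.sum_congr rfl fun i _ => ?_
    have := sum_profile_eq (i := i) q (f i)
    simp only [mul_comm (q _)]
    rw [this]
    refine Finset.sum_congr rfl fun b _ => ?_
    rw [← hm, mul_comm]; rfl
  have e2 : ∀ a, q a * ∑ i, f i (a i) ≤
      - ∑ i, ∑ b', η i (a i) b' * (q a * (u i a - u i (Function.update a i b'))) := by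
    intro a
    have h2 : ∑ i, f i (a i) ≤
        - ∑ i, ∑ b', η i (a i) b' * (u i a - u i (Function.update a i b')) := by
      have := h a
      simp only [mul_sub, Finset.sum_sub_distrib, ← Finset.sum_mul, (hη _ _).2, one_mul]
      rw [Finset.sum_add_distrib] at this
      linarith
    have h3 := mul_le_mul_of_nonneg_left h2 (hq.1 a)
    refine h3.trans (le_of_eq ?_)
    rw [mul_neg, Finset.mul_sum]
    congr 1
    refine Finset.sum_congr rfl fun i _ => ?_
    rw [Finset.mul_sum]
    refine Finset.sum_congr rfl fun i _ => ?_
    ring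
  rw [e1]
  refine (Finset.sum_le_sum fun a _ => e2 a).trans ?_
  rw [Finset.sum_neg_distrib, neg_nonpos, Finset.sum_comm]
  refine Finset.sum_nonneg fun i _ => ?_
  rw [Finset.sum_comm]
  refine Finset.sum_nonneg fun b' _ => ?_
  rw [sum_profile_eq (i := i) (fun a => q a * (u i a - u i (Function.update a i b')))
    (fun b => η i b b')]
  exact Finset.sum_nonneg fun b _ => mul_nonneg ((hη i b).1 b') (hq.2.2 i b b')

theorem hard_dir (u : ∀ i : N, (∀ j, A j) → ℝ) (p : ∀ i, A i → ℝ) (hp : IsMarginalProfile p)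
    (g : ∀ i, A i → ℝ) (l : ∀ i, A i → A i → ℝ) (hl : ∀ i b b', 0 ≤ l i b b')
    (h : ∀ a : ∀ j, A j, ∑ i, g i (a i) - ∑ i, ∑ b, p i b * g i b
      + ∑ i, ∑ b', l i (a i) b' * (u i a - u i (Function.update a i b')) < 0) :
    ∃ (f : ∀ i, A i → ℝ) (η : ∀ i, A i → A i → ℝ),
          IsKernel η ∧
          (∀ a : ∀ j, A j,
            ∑ i, (u i a + f i (a i)) ≤
              ∑ i, ∑ b' : A i, η i (a i) b' * u i (Function.update a i b')) ∧
          0 < ∑ i, ∑ b : A i, p i b * f i b := by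
  set G := ∑ i, ∑ b, p i b * g i b with hG
  obtain ⟨ε, hε, hε'⟩ : ∃ ε > 0, ∀ a : ∀ j, A j, ∑ i, g i (a i) - G
      + ∑ i, ∑ b', l i (a i) b' * (u i a - u i (Function.update a i b')) ≤ -ε := by
    obtain ⟨a0, ha0⟩ := Finite.exists_max (fun a : ∀ j, A j => ∑ i, g i (a i) - G
      + ∑ i, ∑ b', l i (a i) b' * (u i a - u i (Function.update a i b')))
    exact ⟨_, neg_pos.2 (h a0), fun a => by rw [neg_neg]; exact ha0 a⟩
  set S : ℝ := 1 + ∑ i, ∑ b, ∑ b', l i b b' with hS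
  have hSb : ∀ i b, ∑ b', l i b b' ≤ S := by
    intro i b
    have h1 : ∑ b', l i b b' ≤ ∑ b, ∑ b', l i b b' :=
      Finset.single_le_sum (f := fun b => ∑ b', l i b b')
        (fun b _ => Finset.sum_nonneg fun b' _ => hl i b b') (Finset.mem_univ b)
    have h2 : ∑ b, ∑ b', l i b b' ≤ ∑ i, ∑ b, ∑ b', l i b b' :=
      Finset.single_le_sum (f := fun i => ∑ b, ∑ b', l i b b')
        (fun i _ => Finset.sum_nonneg fun b _ => Finset.sum_nonneg fun b' _ => hl i b b')
        (Finset.mem_univ i)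
    linarith
  have hS0 : 0 < S := by
    have : 0 ≤ ∑ i, ∑ b, ∑ b', l i b b' := Finset.sum_nonneg fun i _ =>
      Finset.sum_nonneg fun b _ => Finset.sum_nonneg fun b' _ => hl i b b'
    linarith
  have hn : (0 : ℝ) < Fintype.card N := by exact_mod_cast Fintype.card_pos
  refine ⟨fun i b => (g i b + (ε - G) / Fintype.card N) / S,
    fun i b b' => l i b b' / S + if b = b' then 1 - (∑ c, l i b c) / S else 0, ?_, ?_, ?_⟩
  · intro i b
    refine ⟨fun b' => ?_, ?_⟩
    · have h1 := div_nonneg (hl i b b') hS0.le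
      have h2 : (∑ c, l i b c) / S ≤ 1 := (div_le_one hS0).2 (hSb i b)
      dsimp only
      split_ifs <;> linarith
    · rw [Finset.sum_add_distrib, ← Finset.sum_div]
      simp
  · intro a
    have e1 : ∀ i, ∑ b', (l i (a i) b' / S + if a i = b' then 1 - (∑ c, l i (a i) c) / S else 0)
        * u i (Function.update a i b') =
        u i a - (∑ b', l i (a i) b' * (u i a - u i (Function.update a i b'))) / S := by
      intro i
      simp only [add_mul, Finset.sum_add_distrib, ite_mul, zero_mul, Finset.sum_ite_eq,
        Finset.mem_univ, if_true, Function.update_eq_self, mul_sub, Finset.sum_sub_distrib,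
        ← Finset.sum_mul, div_mul_eq_mul_div, ← Finset.sum_div]
      ring
    have e2 : ∑ i, (g i (a i) + (ε - G) / Fintype.card N) / S
        = (∑ i, g i (a i) + (ε - G)) / S := by
      rw [← Finset.sum_div, Finset.sum_add_distrib]
      simp only [Finset.sum_const, Finset.card_univ, nsmul_eq_mul]
      rw [mul_div_cancel₀ _ hn.ne']
    simp only [e1]
    rw [Finset.sum_add_distrib, Finset.sum_sub_distrib, e2, ← Finset.sum_div]
    have h4 := div_nonpos_of_nonpos_of_nonneg (show ∑ i, g i (a i) + (ε - G) +
      ∑ i, ∑ b', l i (a i) b' * (u i a - u i (Function.update a i b')) ≤ 0 by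
        linarith [hε' a]) hS0.le
    rw [add_div] at h4
    linarith
  · have e : ∑ i, ∑ b, p i b * ((g i b + (ε - G) / Fintype.card N) / S) = ε / S := by
      simp only [← mul_div_assoc, ← Finset.sum_div, mul_add, Finset.sum_add_distrib,
        ← Finset.sum_mul, hp.2]
      rw [← hG]
      simp only [Finset.sum_const, Finset.card_univ, nsmul_eq_mul, one_mul, mul_one]
      field_simp
      ring
    rw [e]
    positivity

theorem compatible_with_CE_iff_unexploitable
    (u : ∀ i : N, (∀ j, A j) → ℝ) (p : ∀ i, A i → ℝ) (hp : IsMarginalProfile p) :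
    (∃ q : (∀ j, A j) → ℝ, IsCorrelatedEq u q ∧ ∀ i (b : A i), marg q i b = p i b) ↔
      ¬ ∃ (f : ∀ i, A i → ℝ) (η : ∀ i, A i → A i → ℝ),
          IsKernel η ∧
          (∀ a : ∀ j, A j,
            ∑ i, (u i a + f i (a i)) ≤
              ∑ i, ∑ b' : A i, η i (a i) b' * u i (Function.update a i b')) ∧
          0 < ∑ i, ∑ b : A i, p i b * f i b := by
  constructor
  · rintro ⟨q, hq, hm⟩ ⟨f, η, hη, h1, h2⟩
    exact absurd (easy_dir u p q hq hm f η hη h1) (not_le.2 h2)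
  · intro hne
    by_contra hnq
    apply hne
    obtain ⟨g, l, hl, h⟩ := farkas_aux (Q := ∀ j, A j) (ι := Σ i, A i)
      (κ := Σ i, A i × A i) (fun a s => (if a s.1 = s.2 then 1 else 0) - p s.1 s.2)
      (fun a s => if a s.1 = s.2.1 then u s.1 a - u s.1 (Function.update a s.1 s.2.2) else 0) (by
        rintro ⟨q, h0, h1, h2, h3⟩
        refine hnq ⟨q, ⟨h0, h1, fun i b b' => ?_⟩, fun i b => ?_⟩
        · simpa only [mul_ite, mul_zero] using h3 ⟨i, b, b'⟩
        · have := h2 ⟨i, b⟩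
          simp only [mul_sub, Finset.sum_sub_distrib, ← Finset.sum_mul, h1, mul_ite, mul_one,
            mul_zero, one_mul] at this
          unfold marg
          linarith)
    refine hard_dir u p hp (fun i b => g ⟨i, b⟩) (fun i b b' => l ⟨i, b, b'⟩)
      (fun i b b' => hl _) (fun a => ?_)
    have ha := h a
    simp only [Fintype.sum_sigma, Fintype.sum_prod_type_right, mul_sub, mul_ite, mul_one, mul_zero,
      Finset.sum_sub_distrib, Finset.sum_ite_eq, Finset.mem_univ, if_true] at ha
    simp only [mul_sub, Finset.sum_sub_distrib, mul_comm (p _ _)]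
    linarith
end

section
/- Let (N, (A_i)_{i∈N}, (u_i)_{i∈N}) be a finite simultaneous-move game, let q be a correlated equilibrium, and let p = (p_i)_{i∈N} be the marginal strategy profile of q (p_i(a_i) = Σ_{a_{-i}} q(a_i, a_{-i})). Then for any fee functions f_i : A_i → ℝ and stochastic kernels η_i : A_i → Δ(A_i) satisfying, for every action profile a ∈ ∏_i A_i, Σ_{i∈N} [u_i(a) + f_i(a_i)] ≤ Σ_{i∈N} Σ_{a_i'∈A_i} η_i(a_i, a_i') u_i(a_i', a_{-i}), it holds that Σ_{i∈N} Σ_{a_i∈A_i} p_i(a_i) f_i(a_i) ≤ 0. -/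
open Finset

variable {N : Type*} [Fintype N] [Nonempty N] [DecidableEq N]
  {A : N → Type*} [∀ i, Fintype (A i)] [∀ i, Nonempty (A i)] [∀ i, DecidableEq (A i)]

theorem CE_marginals_unexploitable
    (u : ∀ i : N, (∀ j, A j) → ℝ) (q : (∀ j, A j) → ℝ) (hq : IsCorrelatedEq u q)
    (p : ∀ i, A i → ℝ) (hpq : ∀ i (b : A i), p i b = marg q i b)
    (f : ∀ i, A i → ℝ) (η : ∀ i, A i → A i → ℝ) (hη : IsKernel η)
    (hIC : ∀ a : ∀ j, A j,
      ∑ i, (u i a + f i (a i)) ≤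
        ∑ i, ∑ b' : A i, η i (a i) b' * u i (Function.update a i b')) :
    ∑ i, ∑ b : A i, p i b * f i b ≤ 0 := by
  obtain ⟨hq0, -, hce⟩ := hq
  -- marginal expectation
  have h1 : ∀ i, ∑ b : A i, p i b * f i b = ∑ a : ∀ j, A j, q a * f i (a i) := by
    intro i
    simp only [hpq, marg, Finset.sum_mul]
    rw [Finset.sum_comm]
    refine Finset.sum_congr rfl fun a _ => ?_
    simp [ite_mul]
  -- the correlated equilibrium inequalities, weighted by the kernel
  have h2 : ∀ i, 0 ≤ ∑ a : ∀ j, A j,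
      q a * (u i a - ∑ b' : A i, η i (a i) b' * u i (Function.update a i b')) := by
    intro i
    have h3 : 0 ≤ ∑ b : A i, ∑ b' : A i, η i b b' * ∑ a : ∀ j, A j,
        (if a i = b then q a * (u i a - u i (Function.update a i b')) else 0) :=
      Finset.sum_nonneg fun b _ => Finset.sum_nonneg fun b' _ =>
        mul_nonneg ((hη i b).1 b') (hce i b b')
    refine h3.trans_eq ?_
    have h4 : ∀ b : A i, (∑ b' : A i, η i b b' * ∑ a : ∀ j, A j,
        (if a i = b then q a * (u i a - u i (Function.update a i b')) else 0))
        = ∑ a : ∀ j, A j, if a i = b then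
          ∑ b' : A i, η i b b' * (q a * (u i a - u i (Function.update a i b'))) else 0 := by
      intro b
      simp only [Finset.mul_sum]
      rw [Finset.sum_comm]
      refine Finset.sum_congr rfl fun a _ => ?_
      split_ifs <;> simp
    simp only [h4]
    rw [Finset.sum_comm]
    refine Finset.sum_congr rfl fun a _ => ?_
    rw [Finset.sum_ite_eq]
    simp only [Finset.mem_univ, if_true]
    calc _ = ∑ b' : A i, (η i (a i) b' * (q a * u i a)
            - q a * (η i (a i) b' * u i (Function.update a i b'))) :=
          Finset.sum_congr rfl fun b' _ => by ring
      _ = _ := by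
          rw [Finset.sum_sub_distrib, ← Finset.sum_mul, (hη i (a i)).2, ← Finset.mul_sum]
          ring
  have h5 := Finset.sum_nonneg fun i (_ : i ∈ Finset.univ) => h2 i
  rw [Finset.sum_comm] at h5
  simp only [h1]
  rw [Finset.sum_comm]
  have h6 : ∑ a : ∀ j, A j, ∑ i, q a * f i (a i) + ∑ a : ∀ j, A j, ∑ i,
      q a * (u i a - ∑ b' : A i, η i (a i) b' * u i (Function.update a i b')) ≤ 0 := by
    rw [← Finset.sum_add_distrib]
    refine Finset.sum_nonpos fun a _ => ?_
    rw [← Finset.mul_sum, ← Finset.mul_sum, ← mul_add]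
    refine mul_nonpos_of_nonneg_of_nonpos (hq0 a) ?_
    have := hIC a
    rw [Finset.sum_add_distrib] at this
    rw [Finset.sum_sub_distrib]
    linarith
  linarith
end

section
/- Let (N, (A_i)_{i∈N}, (u_i)_{i∈N}) be a finite simultaneous-move game and let p = (p_i)_{i∈N} be a marginal strategy profile that is NOT compatible with any correlated equilibrium (i.e., there is no correlated equilibrium q whose marginal on each A_i equals p_i). Then there exist fee functions f_i : A_i → ℝ and stochastic kernels η_i : A_i → Δ(A_i) such that (1) for every action profile a ∈ ∏_i A_i, Σ_{i∈N} u_i(a) ≤ Σ_{i∈N} Σ_{a_i'∈A_i} η_i(a_i, a_i') u_i(a_i', a_{-i}) − Σ_{i∈N} f_i(a_i), and (2) Σ_{i∈N} Σ_{a_i∈A_i} p_i(a_i) f_i(a_i) > 0. -/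
open Finset

variable {N : Type*} [Fintype N] [Nonempty N] [DecidableEq N]
  {A : N → Type*} [∀ i, Fintype (A i)] [∀ i, Nonempty (A i)] [∀ i, DecidableEq (A i)]

theorem sep_aux {V J K : Type*} [Fintype V] [Fintype J] [Fintype K]
    (M : V → J → ℝ) (R : V → K → ℝ) (p : J → ℝ)
    (h : ¬ ∃ q : V → ℝ, (∀ a, 0 ≤ q a) ∧ ∑ a, q a = 1 ∧ (∀ j, ∑ a, q a * M a j = p j) ∧
      ∀ k, 0 ≤ ∑ a, q a * R a k) :
    ∃ (F : J → ℝ) (G : K → ℝ) (c : ℝ), (∀ k, 0 ≤ G k) ∧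
      (∀ a, ∑ j, F j * M a j + ∑ k, G k * R a k ≤ c) ∧ c < ∑ j, F j * p j := by
  classical
  let W : V → (J ⊕ K → ℝ) := fun a => Sum.elim (M a) (R a)
  let L : (V → ℝ) →ₗ[ℝ] (J ⊕ K → ℝ) := Fintype.linearCombination ℝ W
  have hL : ∀ q s, L q s = ∑ a, q a * W a s := by
    intro q s
    simp [L, Fintype.linearCombination_apply, Finset.sum_apply]
  let T : Set (J ⊕ K → ℝ) := {x | (∀ j, x (Sum.inl j) = p j) ∧ ∀ k, 0 ≤ x (Sum.inr k)}
  have hTc : Convex ℝ T := by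
    rintro x ⟨hx1, hx2⟩ y ⟨hy1, hy2⟩ a b ha hb hab
    refine ⟨fun j => ?_, fun k => ?_⟩
    · simp only [Pi.add_apply, Pi.smul_apply, smul_eq_mul, hx1, hy1]
      rw [← add_mul, hab, one_mul]
    · simp only [Pi.add_apply, Pi.smul_apply, smul_eq_mul]
      have := hx2 k
      have := hy2 k
      positivity
  have hTcl : IsClosed T := by
    have : T = (⋂ j, {x : J ⊕ K → ℝ | x (Sum.inl j) = p j}) ∩
        ⋂ k, {x : J ⊕ K → ℝ | 0 ≤ x (Sum.inr k)} := by
      ext x; simp [T]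
    rw [this]
    refine IsClosed.inter (isClosed_iInter fun j => ?_) (isClosed_iInter fun k => ?_)
    · exact isClosed_eq (continuous_apply _) continuous_const
    · exact isClosed_le continuous_const (continuous_apply _)
  have hS1 : Convex ℝ (L '' stdSimplex ℝ V) := (convex_stdSimplex ℝ V).linear_image L
  have hS2 : IsCompact (L '' stdSimplex ℝ V) :=
    (isCompact_stdSimplex ℝ V).image L.continuous_of_finiteDimensional
  have hd : Disjoint (L '' stdSimplex ℝ V) T := by
    rw [Set.disjoint_left]
    rintro _ ⟨q, ⟨hq0, hq1⟩, rfl⟩ ⟨h1, h2⟩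
    refine h ⟨q, hq0, hq1, fun j => ?_, fun k => ?_⟩
    · rw [← h1 j, hL]; rfl
    · have := h2 k
      rwa [hL] at this
  obtain ⟨φ, c, v, hφS, hcv, hφT⟩ := geometric_hahn_banach_compact_closed hS1 hS2 hTc hTcl hd
  let e : J ⊕ K → ℝ := fun s => φ (Pi.single s 1)
  have hφ : ∀ x, φ x = ∑ j, e (Sum.inl j) * x (Sum.inl j) + ∑ k, e (Sum.inr k) * x (Sum.inr k) := by
    intro x
    rw [← Fintype.sum_sum_type (fun s => e s * x s)]
    conv_lhs => rw [pi_eq_sum_univ' x]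
    simp only [map_sum, map_smul, smul_eq_mul, e]
    refine Finset.sum_congr rfl fun s _ => ?_
    rw [mul_comm]
  refine ⟨fun j => e (Sum.inl j), fun k => e (Sum.inr k), c, fun k => ?_, fun a => ?_, ?_⟩
  · by_contra hneg
    push Not at hneg
    set B := ∑ j, e (Sum.inl j) * p j with hB
    have key : ∀ t : ℝ, 0 ≤ t → v < B + e (Sum.inr k) * t := by
      intro t ht
      have := hφT (Sum.elim p (Pi.single k t)) ⟨fun j => rfl, fun k' => by
        by_cases hk : k' = k
        · subst hk; simpa using ht
        · simp [hk]⟩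
      rw [hφ] at this
      simpa [Pi.single_apply] using this
    have h0 := key 0 le_rfl
    have h1 := key ((v - B) / e (Sum.inr k)) (div_nonneg_of_nonpos (by linarith) hneg.le)
    rw [mul_div_cancel₀ _ hneg.ne] at h1
    linarith
  · have := hφS (L (Pi.single a 1)) ⟨_, single_mem_stdSimplex ℝ a, rfl⟩
    rw [hφ] at this
    have hs : ∀ s, L (Pi.single a 1) s = W a s := by
      intro s; rw [hL]; simp [Pi.single_apply]
    simp only [hs] at this
    exact this.le
  · have := hφT (Sum.elim p 0) ⟨fun j => rfl, fun k' => le_rfl⟩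
    rw [hφ] at this
    simp at this
    linarith

theorem not_compatible_implies_exploitable
    (u : ∀ i : N, (∀ j, A j) → ℝ) (p : ∀ i, A i → ℝ) (hp : IsMarginalProfile p)
    (hnc : ¬ ∃ q : (∀ j, A j) → ℝ,
      IsCorrelatedEq u q ∧ ∀ i (b : A i), marg q i b = p i b) :
    ∃ (f : ∀ i, A i → ℝ) (η : ∀ i, A i → A i → ℝ),
      IsKernel η ∧
      (∀ a : ∀ j, A j,
        ∑ i, u i a ≤
          (∑ i, ∑ b' : A i, η i (a i) b' * u i (Function.update a i b')) -
            ∑ i, f i (a i)) ∧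
      0 < ∑ i, ∑ b : A i, p i b * f i b := by
  classical
  obtain ⟨F, G, c, hG, h1, h2⟩ := sep_aux (V := ∀ j, A j) (J := Σ i, A i) (K := Σ i, A i × A i)
    (fun a s => if a s.1 = s.2 then 1 else 0)
    (fun a s => if a s.1 = s.2.1 then u s.1 a - u s.1 (Function.update a s.1 s.2.2) else 0)
    (fun s => p s.1 s.2) (by
      rintro ⟨q, hq0, hq1, hq2, hq3⟩
      refine hnc ⟨q, ⟨hq0, hq1, fun i b b' => ?_⟩, fun i b => ?_⟩
      · simpa only [mul_ite, mul_zero] using hq3 ⟨i, b, b'⟩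
      · simpa only [marg, mul_ite, mul_zero, mul_one] using hq2 ⟨i, b⟩)
  set n : ℝ := (Fintype.card N : ℝ) with hn
  have hn0 : 0 < n := by simp [hn, Fintype.card_pos]
  set C : ℝ := 1 + ∑ s, G s with hC
  have hGs : 0 ≤ ∑ s, G s := Finset.sum_nonneg fun s _ => hG s
  have hC0 : 0 < C := by linarith
  have hrow : ∀ i (b : A i), ∑ b', G ⟨i, b, b'⟩ ≤ C := by
    intro i b
    have e1 : ∑ s, G s = ∑ i, ∑ b, ∑ b', G ⟨i, b, b'⟩ := by
      rw [Fintype.sum_sigma]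
      exact Finset.sum_congr rfl fun i _ => Fintype.sum_prod_type _
    have e2 : ∑ b', G ⟨i, b, b'⟩ ≤ ∑ b, ∑ b', G ⟨i, b, b'⟩ :=
      Finset.single_le_sum (f := fun b => ∑ b', G ⟨i, b, b'⟩)
        (fun b _ => Finset.sum_nonneg fun _ _ => hG _) (Finset.mem_univ b)
    have e3 : ∑ b, ∑ b', G ⟨i, b, b'⟩ ≤ ∑ i, ∑ b, ∑ b', G ⟨i, b, b'⟩ :=
      Finset.single_le_sum (f := fun i => ∑ b, ∑ b', G ⟨i, b, b'⟩)
        (fun i _ => Finset.sum_nonneg fun _ _ => Finset.sum_nonneg fun _ _ => hG _)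
        (Finset.mem_univ i)
    linarith
  refine ⟨fun i b => (F ⟨i, b⟩ - c / n) / C, fun i b b' => G ⟨i, b, b'⟩ / C +
    if b' = b then 1 - (∑ b'', G ⟨i, b, b''⟩) / C else 0, ?_, ?_, ?_⟩
  · intro i b
    refine ⟨fun b' => ?_, ?_⟩
    · have hh : (∑ b'', G ⟨i, b, b''⟩) / C ≤ 1 := (div_le_one hC0).2 (hrow i b)
      have := div_nonneg (hG ⟨i, b, b'⟩) hC0.le
      beta_reduce
      split_ifs <;> linarith
    · rw [Finset.sum_add_distrib, ← Finset.sum_div]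
      simp
  · intro a
    have ha := h1 a
    have t1 : ∑ s : (Σ i, A i), F s * (if a s.1 = s.2 then (1:ℝ) else 0) = ∑ i, F ⟨i, a i⟩ := by
      rw [Fintype.sum_sigma]
      simp
    have t2 : ∑ s : (Σ i, A i × A i), G s * (if a s.1 = s.2.1 then
        u s.1 a - u s.1 (Function.update a s.1 s.2.2) else 0) =
        ∑ i, ∑ b', G ⟨i, a i, b'⟩ * (u i a - u i (Function.update a i b')) := by
      rw [Fintype.sum_sigma]
      refine Finset.sum_congr rfl fun i _ => ?_
      rw [Fintype.sum_prod_type, Finset.sum_comm]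
      simp
    rw [t1, t2] at ha
    have t3 : ∑ i, ((F ⟨i, a i⟩ - c / n) / C) = (∑ i, F ⟨i, a i⟩ - c) / C := by
      rw [← Finset.sum_div, Finset.sum_sub_distrib, Finset.sum_const, Finset.card_univ,
        nsmul_eq_mul, ← hn, mul_div_cancel₀ _ hn0.ne']
    have t4 : ∀ i, ∑ b' : A i, (G ⟨i, a i, b'⟩ / C +
        if b' = a i then 1 - (∑ b'', G ⟨i, a i, b''⟩) / C else 0) * u i (Function.update a i b')
        = u i a - (∑ b', G ⟨i, a i, b'⟩ * (u i a - u i (Function.update a i b'))) / C := by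
      intro i
      simp only [add_mul, Finset.sum_add_distrib, ite_mul, zero_mul, Finset.sum_ite_eq',
        Finset.mem_univ, if_true, Function.update_eq_self, mul_sub, Finset.sum_sub_distrib,
        ← Finset.sum_mul, div_mul_eq_mul_div, ← Finset.sum_div]
      ring
    simp only [t3, t4]
    rw [Finset.sum_sub_distrib, ← Finset.sum_div]
    have : (∑ i, ∑ b', G ⟨i, a i, b'⟩ * (u i a - u i (Function.update a i b'))) / C +
        (∑ i, F ⟨i, a i⟩ - c) / C ≤ 0 := by
      rw [← add_div]
      exact div_nonpos_of_nonpos_of_nonneg (by linarith) hC0.le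
    linarith
  · have : ∑ i, ∑ b : A i, p i b * ((F ⟨i, b⟩ - c / n) / C) =
        (∑ s : (Σ i, A i), F s * p s.1 s.2 - c) / C := by
      have : ∀ i, ∑ b : A i, p i b * ((F ⟨i, b⟩ - c / n) / C) =
          (∑ b, F ⟨i, b⟩ * p i b - c / n) / C := by
        intro i
        have h3 : c / n = ∑ b : A i, p i b * (c / n) := by
          rw [← Finset.sum_mul, hp.2 i, one_mul]
        conv_rhs => rw [h3, ← Finset.sum_sub_distrib, Finset.sum_div]
        exact Finset.sum_congr rfl fun b _ => by ring
      simp only [this]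
      rw [Fintype.sum_sigma, ← Finset.sum_div, Finset.sum_sub_distrib, Finset.sum_const,
        Finset.card_univ, nsmul_eq_mul, ← hn, mul_div_cancel₀ _ hn0.ne']
    rw [this]
    exact div_pos (by linarith) hC0
end

section
/- Let (N, (A_i)_{i∈N}, (u_i)_{i∈N}) be a finite simultaneous-move game and let p = (p_i)_{i∈N} be a marginal strategy profile. Then p is a Nash equilibrium (i.e., for every player i and all a_i, a_i' ∈ A_i with p_i(a_i) > 0, Σ_{a_{-i}} (∏_{j≠i} p_j(a_j)) [u_i(a_i, a_{-i}) − u_i(a_i', a_{-i})] ≥ 0) if and only if p is unexploitable by profile-wise transfer schemes (i.e., there do not exist a fee function f : ∏_i A_i → ℝ and stochastic kernels η_i : A_i → Δ(A_i), one for each player i, such that (1) for every action profile a ∈ ∏_i A_i, Σ_{i∈N} u_i(a) ≤ Σ_{i∈N} Σ_{a_i'∈A_i} η_i(a_i, a_i') u_i(a_i', a_{-i}) − f(a), and (2) Σ_{a∈∏_i A_i} (∏_{i∈N} p_i(a_i)) f(a) > 0). -/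
open Finset

variable {N : Type*} [Fintype N] [Nonempty N] [DecidableEq N]
  {A : N → Type*} [∀ i, Fintype (A i)] [∀ i, Nonempty (A i)] [∀ i, DecidableEq (A i)]

/-- `p` is a Nash equilibrium of the game with utilities `u`. -/
def IsNashEq (u : ∀ i : N, (∀ j, A j) → ℝ) (p : ∀ i, A i → ℝ) : Prop :=
  ∀ (i : N) (b b' : A i), 0 < p i b →
    0 ≤ ∑ a : ∀ j, A j,
          (if a i = b then
            (∏ j ∈ Finset.univ.erase i, p j (a j)) * (u i a - u i (Function.update a i b'))
          else 0)

/-- Gain of player `i` from action `b` against the deviation `b'`. -/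
def nashGain (u : ∀ i : N, (∀ j, A j) → ℝ) (p : ∀ i, A i → ℝ) (i : N) (b b' : A i) : ℝ :=
  ∑ a : ∀ j, A j,
    (if a i = b then
      (∏ j ∈ Finset.univ.erase i, p j (a j)) * (u i a - u i (Function.update a i b'))
    else 0)

theorem nashGain_self (u : ∀ i : N, (∀ j, A j) → ℝ) (p : ∀ i, A i → ℝ) (i : N) (b : A i) :
    nashGain u p i b b = 0 := by
  unfold nashGain
  apply Finset.sum_eq_zero
  intro a _
  split_ifs with h
  · subst h
    simp
  · rfl

theorem nashGain_key (u : ∀ i : N, (∀ j, A j) → ℝ) (p : ∀ i, A i → ℝ)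
    (η : ∀ i, A i → A i → ℝ) (hη : IsKernel η) :
    ∑ a : ∀ j, A j, (∏ i, p i (a i)) *
      ((∑ i, u i a) - ∑ i, ∑ b' : A i, η i (a i) b' * u i (Function.update a i b'))
      = ∑ i, ∑ b : A i, ∑ b' : A i, η i b b' * (p i b * nashGain u p i b b') := by
  have h1 : ∀ a : ∀ j, A j, (∏ i, p i (a i)) *
      ((∑ i, u i a) - ∑ i, ∑ b' : A i, η i (a i) b' * u i (Function.update a i b'))
      = ∑ i, ∑ b : A i, ∑ b' : A i, η i b b' * (p i b * (if a i = b then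
      (∏ j ∈ Finset.univ.erase i, p j (a j)) * (u i a - u i (Function.update a i b'))
    else 0)) := by
    intro a
    rw [← Finset.sum_sub_distrib, Finset.mul_sum]
    apply Finset.sum_congr rfl
    intro i _
    symm
    rw [Finset.sum_eq_single (a i)]
    · symm
      simp only [if_true]
      have hu : u i a = ∑ b' : A i, η i (a i) b' * u i a := by
        rw [← Finset.sum_mul, (hη i (a i)).2, one_mul]
      conv_lhs => rw [hu]
      rw [← Finset.sum_sub_distrib, Finset.mul_sum,
        ← Finset.mul_prod_erase Finset.univ (fun i => p i (a i)) (Finset.mem_univ i)]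
      apply Finset.sum_congr rfl
      intro b' _
      ring
    · intro b _ hb
      simp [hb.symm]
    · simp
  rw [Finset.sum_congr rfl (fun a _ => h1 a), Finset.sum_comm]
  apply Finset.sum_congr rfl
  intro i _
  rw [Finset.sum_comm]
  apply Finset.sum_congr rfl
  intro b _
  rw [Finset.sum_comm]
  apply Finset.sum_congr rfl
  intro b' _
  rw [nashGain, Finset.mul_sum, Finset.mul_sum]

theorem nash_iff_unexploitable_profilewise
    (u : ∀ i : N, (∀ j, A j) → ℝ) (p : ∀ i, A i → ℝ) (hp : IsMarginalProfile p) :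
    IsNashEq u p ↔
      ¬ ∃ (f : (∀ j, A j) → ℝ) (η : ∀ i, A i → A i → ℝ),
          IsKernel η ∧
          (∀ a : ∀ j, A j,
            ∑ i, u i a ≤
              (∑ i, ∑ b' : A i, η i (a i) b' * u i (Function.update a i b')) - f a) ∧
          0 < ∑ a : ∀ j, A j, (∏ i, p i (a i)) * f a := by
  constructor
  · rintro hN ⟨f, η, hη, hf, hpos⟩
    have key := nashGain_key u p η hη
    have h0 : 0 ≤ ∑ i, ∑ b : A i, ∑ b' : A i, η i b b' * (p i b * nashGain u p i b b') := by
      refine Finset.sum_nonneg fun i _ => Finset.sum_nonneg fun b _ =>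
        Finset.sum_nonneg fun b' _ => mul_nonneg ((hη i b).1 b') ?_
      rcases (hp.1 i b).eq_or_lt with h | h
      · rw [← h, zero_mul]
      · exact mul_nonneg h.le (hN i b b' h)
    rw [← key] at h0
    have h2 : ∑ a : ∀ j, A j, (∏ i, p i (a i)) *
      ((∑ i, u i a) - ∑ i, ∑ b' : A i, η i (a i) b' * u i (Function.update a i b'))
      ≤ ∑ a : ∀ j, A j, -((∏ i, p i (a i)) * f a) := by
      apply Finset.sum_le_sum
      intro a _
      rw [← mul_neg]
      apply mul_le_mul_of_nonneg_left _ (Finset.prod_nonneg fun i _ => hp.1 i (a i))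
      have := hf a
      linarith
    rw [Finset.sum_neg_distrib] at h2
    linarith
  · intro hne i₀ b₀ c₀ hb
    by_contra hlt
    apply hne
    have hG : nashGain u p i₀ b₀ c₀ < 0 := not_le.mp hlt
    let d : ∀ i, A i → A i := Function.update (fun _ b => b) i₀ (Function.update id b₀ c₀)
    let η : ∀ i, A i → A i → ℝ := fun i b c => if c = d i b then 1 else 0
    have hη : IsKernel η := by
      intro i b
      refine ⟨fun c => ?_, ?_⟩
      · simp only [η]
        split_ifs <;> norm_num
      · simp [η]
    have key := nashGain_key u p η hη
    have hR : ∑ i, ∑ b : A i, ∑ b' : A i, η i b b' * (p i b * nashGain u p i b b')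
        = p i₀ b₀ * nashGain u p i₀ b₀ c₀ := by
      simp only [η, ite_mul, one_mul, zero_mul, Finset.sum_ite_eq', Finset.sum_ite_eq,
        Finset.mem_univ, if_true]
      rw [Finset.sum_eq_single i₀, Finset.sum_eq_single b₀]
      · simp [d]
      · intro b _ hbb
        simp [d, hbb, nashGain_self]
      · simp
      · intro i _ hi
        simp [d, hi, nashGain_self]
      · simp
    refine ⟨fun a => (∑ i, ∑ b' : A i, η i (a i) b' * u i (Function.update a i b'))
      - ∑ i, u i a, η, hη, fun a => by linarith, ?_⟩
    have h3 : ∑ a : ∀ j, A j, (∏ i, p i (a i)) *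
        ((∑ i, ∑ b' : A i, η i (a i) b' * u i (Function.update a i b')) - ∑ i, u i a)
        = - (p i₀ b₀ * nashGain u p i₀ b₀ c₀) := by
      rw [← hR, ← key, ← Finset.sum_neg_distrib]
      apply Finset.sum_congr rfl
      intro a _
      ring
    rw [h3]
    have := mul_neg_of_pos_of_neg hb hG
    linarith
end

section
/- Let (N, (A_i)_{i∈N}, (u_i)_{i∈N}) be a finite simultaneous-move game and let p = (p_i)_{i∈N} be a Nash equilibrium. Then for every fee function f : ∏_i A_i → ℝ and stochastic kernels η_i : A_i → Δ(A_i) satisfying, for every action profile a ∈ ∏_i A_i, Σ_{i∈N} u_i(a) ≤ Σ_{i∈N} Σ_{a_i'∈A_i} η_i(a_i, a_i') u_i(a_i', a_{-i}) − f(a), it holds that Σ_{a∈∏_i A_i} (∏_{i∈N} p_i(a_i)) f(a) ≤ 0. -/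
open Finset

variable {N : Type*} [Fintype N] [Nonempty N] [DecidableEq N]
  {A : N → Type*} [∀ i, Fintype (A i)] [∀ i, Nonempty (A i)] [∀ i, DecidableEq (A i)]

theorem nash_unexploitable_profilewise
    (u : ∀ i : N, (∀ j, A j) → ℝ) (p : ∀ i, A i → ℝ) (hp : IsMarginalProfile p)
    (hN : IsNashEq u p)
    (f : (∀ j, A j) → ℝ) (η : ∀ i, A i → A i → ℝ) (hη : IsKernel η)
    (hIC : ∀ a : ∀ j, A j,
      ∑ i, u i a ≤
        (∑ i, ∑ b' : A i, η i (a i) b' * u i (Function.update a i b')) - f a) :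
    ∑ a : ∀ j, A j, (∏ i, p i (a i)) * f a ≤ 0 := by
  have key : ∀ i : N, 0 ≤ ∑ a : ∀ j, A j, (∏ j, p j (a j)) *
      ∑ b' : A i, η i (a i) b' * (u i a - u i (Function.update a i b')) := by
    intro i
    have h1 : ∑ a : ∀ j, A j, (∏ j, p j (a j)) *
        ∑ b' : A i, η i (a i) b' * (u i a - u i (Function.update a i b'))
        = ∑ b : A i, ∑ b' : A i, (η i b b' * p i b) * ∑ a : ∀ j, A j,
          (if a i = b then
            (∏ j ∈ Finset.univ.erase i, p j (a j)) * (u i a - u i (Function.update a i b'))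
          else 0) := by
      have h2 : ∀ b : A i, ∑ b' : A i, (η i b b' * p i b) * ∑ a : ∀ j, A j,
          (if a i = b then
            (∏ j ∈ Finset.univ.erase i, p j (a j)) * (u i a - u i (Function.update a i b'))
          else 0) = ∑ a : ∀ j, A j, if b = a i then (∏ j, p j (a j)) *
            ∑ b' : A i, η i (a i) b' * (u i a - u i (Function.update a i b')) else 0 := by
        intro b
        simp_rw [Finset.mul_sum]
        rw [Finset.sum_comm]
        refine Finset.sum_congr rfl fun a _ => ?_
        by_cases h : b = a i
        · subst h
          simp only [if_true]
          refine Finset.sum_congr rfl fun b' _ => ?_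
          rw [← Finset.mul_prod_erase Finset.univ (fun j => p j (a j)) (Finset.mem_univ i)]
          ring
        · have h' : ¬ a i = b := fun e => h e.symm
          simp [h, h']
      rw [Finset.sum_congr rfl fun b _ => h2 b, Finset.sum_comm]
      refine Finset.sum_congr rfl fun a _ => ?_
      simp
    rw [h1]
    refine Finset.sum_nonneg fun b _ => Finset.sum_nonneg fun b' _ => ?_
    rcases (hp.1 i b).eq_or_lt with h | h
    · rw [← h]; simp
    · exact mul_nonneg (mul_nonneg ((hη i b).1 b') h.le) (hN i b b' h)
  have h3 : 0 ≤ ∑ a : ∀ j, A j, (∏ j, p j (a j)) * ∑ i,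
      ∑ b' : A i, η i (a i) b' * (u i a - u i (Function.update a i b')) := by
    simp_rw [Finset.mul_sum (s := (Finset.univ : Finset N))]
    rw [Finset.sum_comm]
    exact Finset.sum_nonneg fun i _ => key i
  have h4 : ∑ a : ∀ j, A j, (∏ i, p i (a i)) * f a ≤ ∑ a : ∀ j, A j, -((∏ j, p j (a j)) * ∑ i,
      ∑ b' : A i, η i (a i) b' * (u i a - u i (Function.update a i b'))) := by
    refine Finset.sum_le_sum fun a _ => ?_
    rw [← mul_neg]
    refine mul_le_mul_of_nonneg_left ?_ (Finset.prod_nonneg fun j _ => hp.1 j (a j))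
    have h5 : ∑ i, ∑ b' : A i, η i (a i) b' * (u i a - u i (Function.update a i b'))
        = ∑ i, u i a - ∑ i, ∑ b' : A i, η i (a i) b' * u i (Function.update a i b') := by
      rw [← Finset.sum_sub_distrib]
      refine Finset.sum_congr rfl fun i _ => ?_
      simp_rw [mul_sub]
      rw [Finset.sum_sub_distrib, ← Finset.sum_mul, (hη i (a i)).2, one_mul]
    rw [h5]
    linarith [hIC a]
  rw [Finset.sum_neg_distrib] at h4
  linarith
end

section
/- Let (N, (A_i)_{i∈N}, (u_i)_{i∈N}) be a finite simultaneous-move game and let p = (p_i)_{i∈N} be a marginal strategy profile that is NOT a Nash equilibrium. Then there exist a fee function f : ∏_i A_i → ℝ and stochastic kernels η_i : A_i → Δ(A_i) such that (1) for every action profile a ∈ ∏_i A_i, Σ_{i∈N} u_i(a) ≤ Σ_{i∈N} Σ_{a_i'∈A_i} η_i(a_i, a_i') u_i(a_i', a_{-i}) − f(a), and (2) Σ_{a∈∏_i A_i} (∏_{i∈N} p_i(a_i)) f(a) > 0. -/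
open Finset

variable {N : Type*} [Fintype N] [Nonempty N] [DecidableEq N]
  {A : N → Type*} [∀ i, Fintype (A i)] [∀ i, Nonempty (A i)] [∀ i, DecidableEq (A i)]

theorem not_nash_implies_exploitable_profilewise
    (u : ∀ i : N, (∀ j, A j) → ℝ) (p : ∀ i, A i → ℝ) (hp : IsMarginalProfile p)
    (hN : ¬ IsNashEq u p) :
    ∃ (f : (∀ j, A j) → ℝ) (η : ∀ i, A i → A i → ℝ),
      IsKernel η ∧
      (∀ a : ∀ j, A j,
        ∑ i, u i a ≤
          (∑ i, ∑ b' : A i, η i (a i) b' * u i (Function.update a i b')) - f a) ∧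
      0 < ∑ a : ∀ j, A j, (∏ i, p i (a i)) * f a := by
  unfold IsNashEq at hN
  push Not at hN
  obtain ⟨i, b, b', hb, hlt⟩ := hN
  let σ : ∀ j, A j → A j :=
    Function.update (fun _ x => x) i (fun x => if x = b then b' else x)
  refine ⟨fun a => ∑ j, (u j (Function.update a j (σ j (a j))) - u j a),
    fun j x y => if y = σ j x then 1 else 0, ?_, ?_, ?_⟩
  · intro j x
    refine ⟨fun y => ?_, ?_⟩
    · dsimp only
      split_ifs <;> norm_num
    · simp
  · intro a
    simp [Finset.sum_sub_distrib]
  · have key : ∀ a : ∀ j, A j,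
        (∏ j, p j (a j)) * ∑ j, (u j (Function.update a j (σ j (a j))) - u j a) =
        -(p i b * (if a i = b then
            (∏ j ∈ Finset.univ.erase i, p j (a j)) * (u i a - u i (Function.update a i b'))
          else 0)) := by
      intro a
      rw [Finset.sum_eq_single i]
      · by_cases h : a i = b
        · rw [← Finset.mul_prod_erase Finset.univ (fun j => p j (a j)) (Finset.mem_univ i)]
          simp only [σ, Function.update_self, h, if_true]
          ring
        · simp [σ, h]
      · intro j _ hj
        simp [σ, Function.update_of_ne hj]
      · simp
    rw [Finset.sum_congr rfl (fun a _ => key a), Finset.sum_neg_distrib, ← Finset.mul_sum]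
    have := mul_neg_of_pos_of_neg hb hlt
    linarith
end

section
/- Let (N, (A_i)_{i∈N}, (u_i)_{i∈N}) be a finite simultaneous-move game. Suppose there exist nonnegative coefficients η_i(a_i, a_i') ≥ 0 (for each player i and a_i, a_i' ∈ A_i) and a function f : ∏_i A_i → ℝ and a marginal strategy profile p such that Σ_a f(a) ∏_i p_i(a_i) < 0 and, for all a ∈ ∏_i A_i, f(a) ≥ Σ_{i∈N} Σ_{a_i'∈A_i} η_i(a_i, a_i')[u_i(a) − u_i(a_i', a_{-i})]. Then there exist stochastic kernels η̃_i : A_i → Δ(A_i) (each row η̃_i(a_i, ·) a probability distribution on A_i) and a function f̃ : ∏_i A_i → ℝ such that Σ_a f̃(a) ∏_i p_i(a_i) < 0 and, for all a ∈ ∏_i A_i, f̃(a) ≥ Σ_{i∈N} [u_i(a) − Σ_{a_i'∈A_i} η̃_i(a_i, a_i') u_i(a_i', a_{-i})]. -/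
open Finset

variable {N : Type*} [Fintype N] [Nonempty N] [DecidableEq N]
  {A : N → Type*} [∀ i, Fintype (A i)] [∀ i, Nonempty (A i)] [∀ i, DecidableEq (A i)]

theorem normalize_multipliers_to_kernels
    (u : ∀ i : N, (∀ j, A j) → ℝ) (p : ∀ i, A i → ℝ) (hp : IsMarginalProfile p)
    (η : ∀ i, A i → A i → ℝ) (hη : ∀ i (b b' : A i), 0 ≤ η i b b')
    (f : (∀ j, A j) → ℝ)
    (h1 : ∑ a : ∀ j, A j, f a * ∏ i, p i (a i) < 0)
    (h2 : ∀ a : ∀ j, A j,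
      ∑ i, ∑ b' : A i, η i (a i) b' * (u i a - u i (Function.update a i b')) ≤ f a) :
    ∃ (η' : ∀ i, A i → A i → ℝ) (f' : (∀ j, A j) → ℝ),
      IsKernel η' ∧
      (∑ a : ∀ j, A j, f' a * ∏ i, p i (a i) < 0) ∧
      ∀ a : ∀ j, A j,
        ∑ i, (u i a - ∑ b' : A i, η' i (a i) b' * u i (Function.update a i b')) ≤
          f' a := by
  classical
  obtain ⟨C, hC0, hC⟩ : ∃ C : ℝ, 0 < C ∧ ∀ i (b : A i), ∑ b', η i b b' ≤ C := by
    have hn : ∀ i (b : A i), 0 ≤ ∑ b', η i b b' :=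
      fun i b => Finset.sum_nonneg fun b' _ => hη i b b'
    have hn2 : ∀ i, 0 ≤ ∑ b : A i, ∑ b', η i b b' :=
      fun i => Finset.sum_nonneg fun b _ => hn i b
    refine ⟨1 + ∑ i, ∑ b : A i, ∑ b', η i b b', ?_, fun i b => ?_⟩
    · have := Finset.sum_nonneg (s := Finset.univ) fun i _ => hn2 i
      linarith
    · have e1 := Finset.single_le_sum (f := fun b : A i => ∑ b', η i b b')
        (fun b _ => hn i b) (Finset.mem_univ b)
      have e2 := Finset.single_le_sum (f := fun i => ∑ b : A i, ∑ b', η i b b')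
        (fun i _ => hn2 i) (Finset.mem_univ i)
      linarith
  refine ⟨fun i b b' => η i b b' / C + if b' = b then 1 - (∑ c, η i b c) / C else 0,
    fun a => f a / C, fun i b => ⟨fun b' => ?_, ?_⟩, ?_, fun a => ?_⟩
  · have h3 : (∑ c, η i b c) / C ≤ 1 := (div_le_one hC0).2 (hC i b)
    have h4 : 0 ≤ η i b b' / C := div_nonneg (hη i b b') hC0.le
    dsimp only
    split_ifs <;> linarith
  · simp [Finset.sum_add_distrib, ← Finset.sum_div]
  · have : ∑ a : ∀ j, A j, f a / C * ∏ i, p i (a i)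
        = (∑ a : ∀ j, A j, f a * ∏ i, p i (a i)) / C := by
      rw [Finset.sum_div]
      exact Finset.sum_congr rfl fun a _ => by ring
    rw [this]
    exact div_neg_of_neg_of_pos h1 hC0
  · refine le_trans (le_of_eq ?_) (div_le_div_of_nonneg_right (h2 a) hC0.le)
    rw [Finset.sum_div]
    refine Finset.sum_congr rfl fun i _ => ?_
    simp only [add_mul, Finset.sum_add_distrib, ite_mul, zero_mul, Finset.sum_ite_eq',
      Finset.mem_univ, if_true, Function.update_eq_self, mul_sub, Finset.sum_sub_distrib,
      ← Finset.sum_mul, div_mul_eq_mul_div, ← Finset.sum_div]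
    ring
end

section
/- Let (N, (A_i)_{i∈N}, (u_i)_{i∈N}) be a finite simultaneous-move game and let p = (p_i)_{i∈N} be a marginal strategy profile. Suppose there exist fee functions f_i : A_i → ℝ and stochastic kernels η_i : A_i → Δ(A_i) such that (1) for every a ∈ ∏_i A_i, Σ_{i∈N}[u_i(a) + f_i(a_i)] ≤ Σ_{i∈N} Σ_{a_i'} η_i(a_i, a_i') u_i(a_i', a_{-i}), and (2) Σ_{i∈N} Σ_{a_i} p_i(a_i) f_i(a_i) > 0. Then for EVERY joint distribution q on ∏_i A_i whose marginal on each A_i equals p_i, the observer's expected fee is positive under q and the pointwise inequality yields Σ_{i∈N} Σ_a q(a) f_i(a_i) > 0; in particular, q cannot be a correlated equilibrium. -/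
open Finset

variable {N : Type*} [Fintype N] [Nonempty N] [DecidableEq N]
  {A : N → Type*} [∀ i, Fintype (A i)] [∀ i, Nonempty (A i)] [∀ i, DecidableEq (A i)]

theorem exploitation_rules_out_all_consistent_CE
    (u : ∀ i : N, (∀ j, A j) → ℝ) (p : ∀ i, A i → ℝ) (hp : IsMarginalProfile p)
    (f : ∀ i, A i → ℝ) (η : ∀ i, A i → A i → ℝ) (hη : IsKernel η)
    (h1 : ∀ a : ∀ j, A j,
      ∑ i, (u i a + f i (a i)) ≤
        ∑ i, ∑ b' : A i, η i (a i) b' * u i (Function.update a i b'))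
    (h2 : 0 < ∑ i, ∑ b : A i, p i b * f i b) :
    ∀ q : (∀ j, A j) → ℝ, (∀ a, 0 ≤ q a) → (∑ a : ∀ j, A j, q a = 1) →
      (∀ i (b : A i), marg q i b = p i b) →
      (0 < ∑ i, ∑ a : ∀ j, A j, q a * f i (a i)) ∧ ¬ IsCorrelatedEq u q := by
  intro q hq0 hq1 hm
  have hpos : 0 < ∑ i, ∑ a : ∀ j, A j, q a * f i (a i) := by
    have e : ∑ i, ∑ a : ∀ j, A j, q a * f i (a i) = ∑ i, ∑ b : A i, p i b * f i b := by
      refine Finset.sum_congr rfl fun i _ => ?_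
      simp only [← hm, marg, Finset.sum_mul]
      rw [Finset.sum_comm]
      refine Finset.sum_congr rfl fun a _ => ?_
      simp [ite_mul]
    rw [e]; exact h2
  refine ⟨hpos, fun hce => ?_⟩
  have hD : ∀ i, 0 ≤ ∑ a : ∀ j, A j,
      q a * (u i a - ∑ b' : A i, η i (a i) b' * u i (Function.update a i b')) := by
    intro i
    have h0 : 0 ≤ ∑ b : A i, ∑ b' : A i, η i b b' * ∑ a : ∀ j, A j,
        (if a i = b then q a * (u i a - u i (Function.update a i b')) else 0) :=
      Finset.sum_nonneg fun b _ => Finset.sum_nonneg fun b' _ =>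
        mul_nonneg ((hη i b).1 b') (hce.2.2 i b b')
    refine h0.trans_eq ?_
    have e1 : ∀ b : A i, ∑ b' : A i, η i b b' * ∑ a : ∀ j, A j,
        (if a i = b then q a * (u i a - u i (Function.update a i b')) else 0)
        = ∑ a : ∀ j, A j, if a i = b then
          ∑ b' : A i, η i b b' * (q a * (u i a - u i (Function.update a i b'))) else 0 := by
      intro b
      simp only [Finset.mul_sum]
      rw [Finset.sum_comm]
      refine Finset.sum_congr rfl fun a _ => ?_
      split_ifs <;> simp
    simp only [e1]
    rw [Finset.sum_comm]
    refine Finset.sum_congr rfl fun a _ => ?_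
    rw [Finset.sum_ite_eq]
    simp only [Finset.mem_univ, if_true]
    have e2 : u i a = ∑ b' : A i, η i (a i) b' * u i a := by
      rw [← Finset.sum_mul, (hη i (a i)).2, one_mul]
    conv_rhs => rw [e2]
    rw [← Finset.sum_sub_distrib, Finset.mul_sum]
    refine Finset.sum_congr rfl fun b' _ => ?_
    ring
  have hS := Finset.sum_nonneg fun i (_ : i ∈ Finset.univ) => hD i
  have hT := add_pos_of_nonneg_of_pos hS hpos
  rw [← Finset.sum_add_distrib] at hT
  simp only [← Finset.sum_add_distrib] at hT
  rw [Finset.sum_comm] at hT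
  refine absurd hT (not_lt.mpr (Finset.sum_nonpos fun a _ => ?_))
  have := mul_nonneg (hq0 a) (sub_nonneg.mpr (h1 a))
  rw [← Finset.sum_sub_distrib, Finset.mul_sum] at this
  rw [← neg_nonneg, ← Finset.sum_neg_distrib]
  refine this.trans_eq (Finset.sum_congr rfl fun i _ => ?_)
  ring
end
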